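/- arXiv:2410.13479 — 7 statements merged into one kernel-verified Lean document; each statement's English description precedes it below -/
import Mathlib

section
/- Let μ be a probability measure on a measurable space T and let L, L' : Q → Set T be families of measurable sets with L q ⊆ L' q for every q : Q. Define h t = { q | t ∈ L q } and h' t = { q | t ∈ L' q }. Then the fibers { t | h t = P } and { t | h' t = P } are measurable for every P : Set Q, the induced distributions μ⃗(h) and μ⃗(h') are distributions on 𝒫(Q), and μ⃗(h) ⪯ μ⃗(h'). -/
open MeasureTheory

/-- A family `U : Set (Set Q)` is upward-closed if `P ∈ U` and `P ⊆ P'` imply `P' ∈ U`. -/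
def UpwardClosed {Q : Type*} (U : Set (Set Q)) : Prop :=
  ∀ ⦃P P' : Set Q⦄, P ∈ U → P ⊆ P' → P' ∈ U

/-- A distribution on `𝒫(Q)`: a nonnegative function on `Set Q` summing to `1`. -/
def IsDistribution {Q : Type*} [Fintype Q] (α : Set Q → ℝ) : Prop :=
  (∀ P, 0 ≤ α P) ∧ ∑ P : Set Q, α P = 1

/-- `α ⪯ β` iff for every upward-closed `U ⊆ 𝒫(Q)`, `∑_{P ∈ U} α P ≤ ∑_{P ∈ U} β P`. -/
def DistLE {Q : Type*} [Fintype Q] (α β : Set Q → ℝ) : Prop :=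
  ∀ U : Set (Set Q), UpwardClosed U → ∑ᶠ P ∈ U, α P ≤ ∑ᶠ P ∈ U, β P

/-- The distribution on `𝒫(Q)` induced by a measure `μ` and a map `h : T → Set Q`:
`μ⃗(h)(P) = μ { t | h t = P }`. -/
noncomputable def inducedDist {T : Type*} [MeasurableSpace T] (μ : Measure T)
    {Q : Type*} (h : T → Set Q) : Set Q → ℝ :=
  fun P => (μ { t | h t = P }).toReal

/-! The sum of `μ⃗(h)` over a family `U` is the measure of `h ⁻¹' U`. Taking `U` to be everything
gives total mass `1`; for `U` upward-closed, enlarging `h` pointwise enlarges `h ⁻¹' U`, so the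
order on distributions reduces to monotonicity of `μ`. -/

section

variable {Q T : Type*} [MeasurableSpace T]

theorem measurableSet_setOf_mem_eq [Countable Q] {L : Q → Set T}
    (hL : ∀ q, MeasurableSet (L q)) (P : Set Q) :
    MeasurableSet { t | { q | t ∈ L q } = P } :=
  have measurable_mem_sets : Measurable fun t => { q | t ∈ L q } :=
    measurable_set_iff.2 fun q => (hL q).mem
  measurable_mem_sets (measurableSet_singleton P)

theorem UpwardClosed.preimage_ae_le {U : Set (Set Q)} (hU : UpwardClosed U) {μ : Measure T}
    {h h' : T → Set Q} (hsub : ∀ᵐ t ∂μ, h t ⊆ h' t) : h ⁻¹' U ≤ᵐ[μ] h' ⁻¹' U :=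
  hsub.mono fun _ hsub_t hmem => hU hmem hsub_t

theorem finsum_mem_inducedDist (μ : Measure T) [IsFiniteMeasure μ] {h : T → Set Q}
    {U : Set (Set Q)} (hU : U.Finite) (hh : ∀ P ∈ U, MeasurableSet { t | h t = P }) :
    ∑ᶠ P ∈ U, inducedDist μ h P = μ.real (h ⁻¹' U) := by
  lift U to Finset (Set Q) using hU
  rw [finsum_mem_coe_finset]
  exact sum_measureReal_preimage_singleton U hh

variable [Fintype Q]

theorem isDistribution_inducedDist (μ : Measure T) [IsProbabilityMeasure μ] {h : T → Set Q}
    (hh : ∀ P, MeasurableSet { t | h t = P }) : IsDistribution (inducedDist μ h) := by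
  refine ⟨fun P => ENNReal.toReal_nonneg, ?_⟩
  calc ∑ P : Set Q, inducedDist μ h P
      = ∑ᶠ P ∈ Set.univ, inducedDist μ h P := by
        rw [finsum_mem_univ, finsum_eq_sum_of_fintype]
    _ = μ.real (h ⁻¹' Set.univ) := finsum_mem_inducedDist μ Set.finite_univ fun P _ => hh P
    _ = 1 := by rw [Set.preimage_univ, probReal_univ]

theorem distLE_inducedDist_of_ae_subset {μ : Measure T} [IsFiniteMeasure μ] {h h' : T → Set Q}
    (hh : ∀ P, MeasurableSet { t | h t = P }) (hh' : ∀ P, MeasurableSet { t | h' t = P })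
    (hsub : ∀ᵐ t ∂μ, h t ⊆ h' t) : DistLE (inducedDist μ h) (inducedDist μ h') := by
  intro U hU
  calc ∑ᶠ P ∈ U, inducedDist μ h P
      = μ.real (h ⁻¹' U) := finsum_mem_inducedDist μ U.toFinite fun P _ => hh P
    _ ≤ μ.real (h' ⁻¹' U) :=
        ENNReal.toReal_mono (measure_ne_top μ _) (measure_mono_ae (hU.preimage_ae_le hsub))
    _ = ∑ᶠ P ∈ U, inducedDist μ h' P :=
        (finsum_mem_inducedDist μ U.toFinite fun P _ => hh' P).symm

theorem inducedDist_mono_general (μ : Measure T) [IsProbabilityMeasure μ] (L L' : Q → Set T)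
    (hL : ∀ q, MeasurableSet (L q)) (hL' : ∀ q, MeasurableSet (L' q))
    (hsub : ∀ q, L q ≤ᵐ[μ] L' q) :
    (∀ P : Set Q, MeasurableSet { t | { q | t ∈ L q } = P }) ∧
    (∀ P : Set Q, MeasurableSet { t | { q | t ∈ L' q } = P }) ∧
    IsDistribution (inducedDist μ fun t => { q | t ∈ L q }) ∧
    IsDistribution (inducedDist μ fun t => { q | t ∈ L' q }) ∧
    DistLE (inducedDist μ fun t => { q | t ∈ L q })
      (inducedDist μ fun t => { q | t ∈ L' q }) := by
  have fiber := measurableSet_setOf_mem_eq hL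
  have fiber' := measurableSet_setOf_mem_eq hL'
  have ae_subset : ∀ᵐ t ∂μ, { q | t ∈ L q } ⊆ { q | t ∈ L' q } := ae_all_iff.2 hsub
  exact ⟨fiber, fiber', isDistribution_inducedDist μ fiber, isDistribution_inducedDist μ fiber',
    distLE_inducedDist_of_ae_subset fiber fiber' ae_subset⟩

end

/-- Let `μ` be a probability measure on `T` and `L, L' : Q → Set T` families of measurable sets
with `L q ⊆ L' q` for every `q`. With `h t = { q | t ∈ L q }` and `h' t = { q | t ∈ L' q }`,
the fibers of `h` and `h'` are measurable, the induced distributions `μ⃗(h)` and `μ⃗(h')` are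
distributions on `𝒫(Q)`, and `μ⃗(h) ⪯ μ⃗(h')`. -/
theorem inducedDist_mono {Q : Type*} [Fintype Q] {T : Type*} [MeasurableSpace T]
    (μ : Measure T) [IsProbabilityMeasure μ]
    (L L' : Q → Set T) (hL : ∀ q, MeasurableSet (L q)) (hL' : ∀ q, MeasurableSet (L' q))
    (hsub : ∀ q, L q ⊆ L' q) :
    (∀ P : Set Q, MeasurableSet { t | { q | t ∈ L q } = P }) ∧
    (∀ P : Set Q, MeasurableSet { t | { q | t ∈ L' q } = P }) ∧
    IsDistribution (inducedDist μ fun t => { q | t ∈ L q }) ∧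
    IsDistribution (inducedDist μ fun t => { q | t ∈ L' q }) ∧
    DistLE (inducedDist μ fun t => { q | t ∈ L q })
      (inducedDist μ fun t => { q | t ∈ L' q }) :=
  inducedDist_mono_general μ L L' hL hL' fun q => (hsub q).eventuallyLE
end

section
/- Let α and β be distributions on 𝒫(Q) with α ⪯ β, and let O ⊆ Set Q × Set Q be upward-closed for componentwise inclusion (if P_L ⊆ P_L', P_R ⊆ P_R', and (P_L, P_R) ∈ O, then (P_L', P_R') ∈ O). Then ∑_{(P_L, P_R) ∈ O} α(P_L)·α(P_R) ≤ ∑_{(P_L, P_R) ∈ O} β(P_L)·β(P_R). -/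
/-!
Replace the two factors of `α ⊗ α` by `β` one at a time. With one coordinate held fixed, the section
of an upward-closed `O` is again upward-closed, so the hypothesis applies to the other factor;
nonnegativity of the weight on the fixed coordinate lets these inequalities be summed.
-/

section StochasticOrder

open Function

variable {X Y R : Type*}

theorem finsum_mem_prod [AddCommMonoid R] {F : X × Y → R} (hF : HasFiniteSupport F)
    (O : Set (X × Y)) :
    ∑ᶠ p ∈ O, F p = ∑ᶠ x, ∑ᶠ y ∈ Prod.mk x ⁻¹' O, F (x, y) := by
  have hFO : HasFiniteSupport (O.indicator F) := by
    simpa only [HasFiniteSupport, Set.support_indicator] using hF.inter_of_right O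
  simp only [finsum_mem_def, finsum_curry _ hFO]
  rfl

theorem finsum_mem_prod_right [AddCommMonoid R] {F : X × Y → R} (hF : HasFiniteSupport F)
    (O : Set (X × Y)) :
    ∑ᶠ p ∈ O, F p = ∑ᶠ y, ∑ᶠ x ∈ (·, y) ⁻¹' O, F (x, y) :=
  calc
    ∑ᶠ p ∈ O, F p = ∑ᶠ q ∈ Prod.swap ⁻¹' O, F q.swap :=
      (finsum_comp_equiv (Equiv.prodComm Y X)).symm
    _ = ∑ᶠ y, ∑ᶠ x ∈ (·, y) ⁻¹' O, F (x, y) :=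
      finsum_mem_prod (hF.comp_of_injective Prod.swap_injective) (Prod.swap ⁻¹' O)

theorem hasFiniteSupport_mul_prod [MulZeroClass R] {f : X → R} {g : Y → R}
    (hf : HasFiniteSupport f) (hg : HasFiniteSupport g) :
    HasFiniteSupport fun p : X × Y => f p.1 * g p.2 :=
  (Set.Finite.prod hf hg).subset fun _ hp => ⟨left_ne_zero_of_mul hp, right_ne_zero_of_mul hp⟩

theorem finsum_mem_mul_prod [NonUnitalNonAssocSemiring R] {f : X → R} {g : Y → R}
    (hf : HasFiniteSupport f) (hg : HasFiniteSupport g) (O : Set (X × Y)) :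
    ∑ᶠ p ∈ O, f p.1 * g p.2 = ∑ᶠ x, f x * ∑ᶠ y ∈ Prod.mk x ⁻¹' O, g y := by
  rw [finsum_mem_prod (hasFiniteSupport_mul_prod hf hg)]
  exact finsum_congr fun x =>
    ((AddMonoidHom.mulLeft (f x)).map_finsum_mem' (hg.subset Set.inter_subset_right)).symm

theorem finsum_mem_mul_prod_right [NonUnitalNonAssocSemiring R] {f : X → R} {g : Y → R}
    (hf : HasFiniteSupport f) (hg : HasFiniteSupport g) (O : Set (X × Y)) :
    ∑ᶠ p ∈ O, f p.1 * g p.2 = ∑ᶠ y, (∑ᶠ x ∈ (·, y) ⁻¹' O, f x) * g y := by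
  rw [finsum_mem_prod_right (hasFiniteSupport_mul_prod hf hg)]
  exact finsum_congr fun y =>
    ((AddMonoidHom.mulRight (g y)).map_finsum_mem' (hf.subset Set.inter_subset_right)).symm

/-- The (first-order) stochastic order on weights on a preorder: `f` gives every upper set at most
the weight that `g` gives it. The two need not have the same total weight. The sums are `finsum`s,
so the notion is only meaningful for finitely supported weights. -/
def StochLE [Preorder X] [AddCommMonoid R] [LE R] (f g : X → R) : Prop :=
  ∀ U : Set X, IsUpperSet U → ∑ᶠ x ∈ U, f x ≤ ∑ᶠ x ∈ U, g x

variable [Preorder X] [Preorder Y] [Semiring R] [PartialOrder R] [IsOrderedRing R]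
  {f f' : X → R} {g g' : Y → R}

theorem StochLE.mul_prod_left (hg : StochLE g g') (hf₀ : ∀ x, 0 ≤ f x)
    (hfs : HasFiniteSupport f) (hgs : HasFiniteSupport g) (hgs' : HasFiniteSupport g') :
    StochLE (fun p : X × Y => f p.1 * g p.2) (fun p => f p.1 * g' p.2) := by
  intro O hO
  rw [finsum_mem_mul_prod hfs hgs, finsum_mem_mul_prod hfs hgs']
  refine finsum_le_finsum' (hfs.mul_left _) (hfs.mul_left _) fun x => ?_
  have hsection : IsUpperSet (Prod.mk x ⁻¹' O) := hO.preimage (monotone_const.prodMk monotone_id)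
  exact mul_le_mul_of_nonneg_left (hg _ hsection) (hf₀ x)

theorem StochLE.mul_prod_right (hf : StochLE f f') (hg₀ : ∀ y, 0 ≤ g y)
    (hfs : HasFiniteSupport f) (hfs' : HasFiniteSupport f') (hgs : HasFiniteSupport g) :
    StochLE (fun p : X × Y => f p.1 * g p.2) (fun p => f' p.1 * g p.2) := by
  intro O hO
  rw [finsum_mem_mul_prod_right hfs hgs, finsum_mem_mul_prod_right hfs' hgs]
  refine finsum_le_finsum' (hgs.mul_right _) (hgs.mul_right _) fun y => ?_
  have hsection : IsUpperSet ((·, y) ⁻¹' O) := hO.preimage (monotone_id.prodMk monotone_const)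
  exact mul_le_mul_of_nonneg_right (hf _ hsection) (hg₀ y)

theorem sum_prod_mono_general (hf : StochLE f f') (hg : StochLE g g')
    (hf₀ : ∀ x, 0 ≤ f x) (hg₀' : ∀ y, 0 ≤ g' y)
    (hfs : HasFiniteSupport f) (hfs' : HasFiniteSupport f')
    (hgs : HasFiniteSupport g) (hgs' : HasFiniteSupport g') :
    StochLE (fun p : X × Y => f p.1 * g p.2) (fun p => f' p.1 * g' p.2) := fun O hO =>
  calc
    ∑ᶠ p ∈ O, f p.1 * g p.2 ≤ ∑ᶠ p ∈ O, f p.1 * g' p.2 :=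
      hg.mul_prod_left hf₀ hfs hgs hgs' O hO
    _ ≤ ∑ᶠ p ∈ O, f' p.1 * g' p.2 := hf.mul_prod_right hg₀' hfs hfs' hgs' O hO

end StochasticOrder

theorem DistLE.stochLE {Q : Type*} [Fintype Q] {α β : Set Q → ℝ} (h : DistLE α β) :
    StochLE α β :=
  fun U hU => h U fun _ _ hP hPP' => hU hPP' hP

/-- If `α ⪯ β` are distributions on `𝒫(Q)` and `O ⊆ Set Q × Set Q` is upward-closed for
componentwise inclusion, then
`∑_{(P_L,P_R) ∈ O} α(P_L)·α(P_R) ≤ ∑_{(P_L,P_R) ∈ O} β(P_L)·β(P_R)`. -/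
theorem sum_prod_mono {Q : Type*} [Fintype Q] (α β : Set Q → ℝ)
    (hα : IsDistribution α) (hβ : IsDistribution β) (hle : DistLE α β)
    (O : Set (Set Q × Set Q))
    (hO : ∀ ⦃PL PR PL' PR' : Set Q⦄,
      (PL, PR) ∈ O → PL ⊆ PL' → PR ⊆ PR' → (PL', PR') ∈ O) :
    ∑ᶠ p ∈ O, α p.1 * α p.2 ≤ ∑ᶠ p ∈ O, β p.1 * β p.2 :=
  sum_prod_mono_general hle.stochLE hle.stochLE hα.1 hβ.1 (Set.toFinite _) (Set.toFinite _)
    (Set.toFinite _) (Set.toFinite _) O fun _ _ hpq hp => hO hp hpq.1 hpq.2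
end

section
/- Suppose Δ : Set Q → A → Set Q → Set Q is monotone in its first and third arguments (if P_L ⊆ P_L' and P_R ⊆ P_R' then Δ P_L a P_R ⊆ Δ P_L' a P_R' for every a : A). Then the operator 𝓕 is monotone with respect to ⪯ on distributions on 𝒫(Q): if α ⪯ β then 𝓕(α) ⪯ 𝓕(β). -/
/-- The operator `𝓕` induced by `Δ`:
`𝓕(β)(P) = (1 / card A) · ∑_{(P_L, a, P_R) with Δ P_L a P_R = P} β(P_L)·β(P_R)`. -/
noncomputable def FOp {A Q : Type*} [Fintype A] [Fintype Q]
    (Δ : Set Q → A → Set Q → Set Q) (β : Set Q → ℝ) (P : Set Q) : ℝ :=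
  (1 / (Fintype.card A : ℝ)) *
    ∑ᶠ x ∈ { x : Set Q × A × Set Q | Δ x.1 x.2.1 x.2.2 = P }, β x.1 * β x.2.2

/-!
Draw the two arguments of `Δ` independently. For a fixed letter `a` and an upward-closed `U`, the
event `Δ L a R ∈ U` is an upper set of pairs `(L, R)`, so it remains to compare product measures on
upper sets. Replace the factors one at a time: every section of an upper set of pairs is an upper
set, and nonnegativity of the other factor allows one to integrate the comparison over all sections.
-/

section Finsum

variable {X Y M : Type*} [Finite X] [Finite Y] [AddCommMonoid M]

theorem finsum_comm_of_finite (f : X → Y → M) : ∑ᶠ (x) (y), f x y = ∑ᶠ (y) (x), f x y := by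
  simpa only [finsum_mem_univ] using finsum_mem_comm f Set.finite_univ Set.finite_univ

theorem finsum_mem_finsum_mem_fiber (φ : X → Y) (f : X → M) (U : Set Y) :
    ∑ᶠ y ∈ U, ∑ᶠ x ∈ {x | φ x = y}, f x = ∑ᶠ x ∈ φ ⁻¹' U, f x := by
  have fibers_disjoint : U.PairwiseDisjoint fun y ↦ {x | φ x = y} := fun _ _ _ _ hne ↦
    Set.disjoint_left.2 fun _ hx hx' ↦ hne (hx.symm.trans hx')
  rw [← finsum_mem_biUnion fibers_disjoint U.toFinite fun _ _ ↦ Set.toFinite _]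
  congr! 3
  simp

theorem finsum_mem_fst_mul_snd_eq_finsum_fst {R : Type*} [NonUnitalNonAssocSemiring R]
    (f : X → R) (g : Y → R) (W : Set (X × Y)) :
    ∑ᶠ p ∈ W, f p.1 * g p.2 = ∑ᶠ x, f x * ∑ᶠ y ∈ {y | (x, y) ∈ W}, g y := by
  rw [finsum_curry _ (Set.toFinite _)]
  exact finsum_congr fun x ↦ (mul_finsum_mem' g (f x) (Set.toFinite _)).symm

theorem finsum_mem_fst_mul_snd_eq_finsum_snd {R : Type*} [NonUnitalNonAssocSemiring R]
    (f : X → R) (g : Y → R) (W : Set (X × Y)) :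
    ∑ᶠ p ∈ W, f p.1 * g p.2 = ∑ᶠ y, (∑ᶠ x ∈ {x | (x, y) ∈ W}, f x) * g y := by
  rw [finsum_curry _ (Set.toFinite _), finsum_comm_of_finite]
  exact finsum_congr fun y ↦ (finsum_mem_mul' f (g y) (Set.toFinite _)).symm

end Finsum

/-- The usual stochastic order on weight functions over a preordered set, of which `DistLE` is the
case of `Set Q` ordered by inclusion. No normalization is imposed; as `finsum` is `0` on infinite
supports, the notion is meaningful for finitely supported weights only. -/
def StochasticLE {X R : Type*} [Preorder X] [AddCommMonoid R] [LE R] (f g : X → R) : Prop :=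
  ∀ U : Set X, IsUpperSet U → ∑ᶠ x ∈ U, f x ≤ ∑ᶠ x ∈ U, g x

theorem distLE_iff_stochasticLE {Q : Type*} [Fintype Q] {α β : Set Q → ℝ} :
    DistLE α β ↔ StochasticLE α β :=
  ⟨fun h U hU ↦ h U fun _ _ hP hPP' ↦ hU hPP' hP, fun h U hU ↦ h U fun _ _ hPP' hP ↦ hU hP hPP'⟩

theorem StochasticLE.prod {X Y R : Type*} [Finite X] [Finite Y] [Preorder X] [Preorder Y]
    [NonUnitalNonAssocSemiring R] [PartialOrder R] [IsOrderedAddMonoid R] [PosMulMono R]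
    [MulPosMono R] {f f' : X → R} {g g' : Y → R} (hf : StochasticLE f f')
    (hg : StochasticLE g g') (f_nonneg : ∀ x, 0 ≤ f x) (g'_nonneg : ∀ y, 0 ≤ g' y) :
    StochasticLE (fun p : X × Y ↦ f p.1 * g p.2) fun p ↦ f' p.1 * g' p.2 := by
  intro W hW
  have isUpperSet_right (x : X) : IsUpperSet {y | (x, y) ∈ W} := fun _ _ hy ↦
    hW (Prod.mk_le_mk.2 ⟨le_rfl, hy⟩)
  have isUpperSet_left (y : Y) : IsUpperSet {x | (x, y) ∈ W} := fun _ _ hx ↦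
    hW (Prod.mk_le_mk.2 ⟨hx, le_rfl⟩)
  calc ∑ᶠ p ∈ W, f p.1 * g p.2
      = ∑ᶠ x, f x * ∑ᶠ y ∈ {y | (x, y) ∈ W}, g y := finsum_mem_fst_mul_snd_eq_finsum_fst f g W
    _ ≤ ∑ᶠ x, f x * ∑ᶠ y ∈ {y | (x, y) ∈ W}, g' y :=
        finsum_le_finsum' (Set.toFinite _) (Set.toFinite _) fun x ↦
          mul_le_mul_of_nonneg_left (hg _ (isUpperSet_right x)) (f_nonneg x)
    _ = ∑ᶠ p ∈ W, f p.1 * g' p.2 := (finsum_mem_fst_mul_snd_eq_finsum_fst f g' W).symm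
    _ = ∑ᶠ y, (∑ᶠ x ∈ {x | (x, y) ∈ W}, f x) * g' y := finsum_mem_fst_mul_snd_eq_finsum_snd f g' W
    _ ≤ ∑ᶠ y, (∑ᶠ x ∈ {x | (x, y) ∈ W}, f' x) * g' y :=
        finsum_le_finsum' (Set.toFinite _) (Set.toFinite _) fun y ↦
          mul_le_mul_of_nonneg_right (hf _ (isUpperSet_left y)) (g'_nonneg y)
    _ = ∑ᶠ p ∈ W, f' p.1 * g' p.2 := (finsum_mem_fst_mul_snd_eq_finsum_snd f' g' W).symm

section FOp

variable {A Q : Type*} [Fintype A] [Fintype Q]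

theorem finsum_mem_FOp (Δ : Set Q → A → Set Q → Set Q) (β : Set Q → ℝ) (U : Set (Set Q)) :
    ∑ᶠ P ∈ U, FOp Δ β P = 1 / (Fintype.card A : ℝ) *
      ∑ᶠ a, ∑ᶠ p ∈ {p : Set Q × Set Q | Δ p.1 a p.2 ∈ U}, β p.1 * β p.2 := by
  simp only [FOp]
  rw [← mul_finsum_mem, finsum_mem_finsum_mem_fiber, finsum_curry₃ _ (Set.toFinite _),
    finsum_comm_of_finite]
  congr! 3 with a
  exact (finsum_curry (fun p : Set Q × Set Q ↦ ∑ᶠ _ : Δ p.1 a p.2 ∈ U, β p.1 * β p.2)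
    (Set.toFinite _)).symm

theorem FOp_mono_general (Δ : Set Q → A → Set Q → Set Q)
    (hΔ : ∀ ⦃PL PL' PR PR' : Set Q⦄ (a : A),
      PL ⊆ PL' → PR ⊆ PR' → Δ PL a PR ⊆ Δ PL' a PR')
    (α β : Set Q → ℝ) (hα : ∀ P, 0 ≤ α P) (hβ : ∀ P, 0 ≤ β P) (hle : DistLE α β) :
    DistLE (FOp Δ α) (FOp Δ β) := by
  intro U hU
  have isUpperSet_pairs (a : A) : IsUpperSet {p : Set Q × Set Q | Δ p.1 a p.2 ∈ U} :=
    fun _ _ hpq hp ↦ hU hp (hΔ a hpq.1 hpq.2)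
  have hle' : StochasticLE α β := distLE_iff_stochasticLE.1 hle
  rw [finsum_mem_FOp, finsum_mem_FOp]
  refine mul_le_mul_of_nonneg_left ?_ (by positivity)
  exact finsum_le_finsum' (Set.toFinite _) (Set.toFinite _) fun a ↦
    hle'.prod hle' hα hβ _ (isUpperSet_pairs a)

end FOp

/-- If `Δ` is monotone in its first and third arguments, then `𝓕` is monotone with respect to
`⪯` on distributions on `𝒫(Q)`: if `α ⪯ β` then `𝓕(α) ⪯ 𝓕(β)`. -/
theorem FOp_mono {A Q : Type*} [Fintype A] [Nonempty A] [Fintype Q]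
    (Δ : Set Q → A → Set Q → Set Q)
    (hΔ : ∀ ⦃PL PL' PR PR' : Set Q⦄ (a : A),
      PL ⊆ PL' → PR ⊆ PR' → Δ PL a PR ⊆ Δ PL' a PR')
    (α β : Set Q → ℝ) (hα : IsDistribution α) (hβ : IsDistribution β)
    (hle : DistLE α β) :
    DistLE (FOp Δ α) (FOp Δ β) :=
  FOp_mono_general Δ hΔ α β hα.1 hβ.1 hle
end

section
/- Let Δ : Set Q → A → Set Q → Set Q and let h : Tr_A → Set Q be such that { t | h t = P } is μ₀-measurable for every P : Set Q. Define h'(t) = Δ (h (t↾[false])) (t []) (h (t↾[true])). Then { t | h' t = P } is measurable for every P, and the induced distribution of h' is obtained by applying 𝓕 to that of h: μ⃗₀(h') = 𝓕(μ⃗₀(h)), where μ⃗₀ denotes the induced distribution with respect to the uniform measure μ₀. -/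
open MeasureTheory

/-- The subtree of `t` induced by the word `v`: `(t↾v)(w) = t (v ++ w)`. -/
def subtree {A : Type*} (t : List Bool → A) (v : List Bool) : List Bool → A :=
  fun w => t (v ++ w)

/-!
Cutting a tree at its root into left subtree, root label and right subtree carries the product
measure `ν^(List Bool)` to `ν^(List Bool) × ν × ν^(List Bool)`: the three pieces depend on disjoint
sets of nodes, hence are independent, and each subtree reads the tree along an injection of nodes,
hence is distributed like the tree itself. So `h (t↾[false])`, `t []` and `h (t↾[true])` are
independent. The event `h' t = P` is the disjoint union, over the finitely many triples with
`Δ P_L a P_R = P`, of the events that these three values are `(P_L, a, P_R)`; adding up their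
probabilities gives the sum defining `𝓕`.
-/

open ProbabilityTheory

section InfinitePi

variable {ι : Type*} {X : ι → Type*} [∀ i, MeasurableSpace (X i)]
  (μ : ∀ i, Measure (X i)) [∀ i, IsProbabilityMeasure (μ i)]

lemma indep_cylinderEvents_infinitePi {S T : Set ι} (hST : Disjoint S T) :
    Indep (cylinderEvents S) (cylinderEvents T) (Measure.infinitePi μ) :=
  indep_iSup_of_disjoint (fun i ↦ (measurable_pi_apply i).comap_le)
    (iIndepFun_infinitePi (X := fun _ x ↦ x) fun _ ↦ measurable_id) hST

lemma indepFun_infinitePi_of_disjoint {β γ : Type*} [MeasurableSpace β] [MeasurableSpace γ]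
    {S T : Set ι} (hST : Disjoint S T) {f : (∀ i, X i) → β} {g : (∀ i, X i) → γ}
    (hf : Measurable[cylinderEvents S] f) (hg : Measurable[cylinderEvents T] g) :
    f ⟂ᵢ[Measure.infinitePi μ] g :=
  indep_of_indep_of_le (indep_cylinderEvents_infinitePi μ hST) hf.comap_le hg.comap_le

end InfinitePi

section Trees

variable {A : Type*}

/-- The decomposition of a tree at its root, `t ↦ (t↾[false], t [], t↾[true])`; the order of the
components is that of the arguments of `Δ`. -/
def rootSplit (t : List Bool → A) : (List Bool → A) × A × (List Bool → A) :=
  (subtree t [false], t [], subtree t [true])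

/-- The triple of values to which `Δ` is applied at `t`: `h` at the left subtree, the letter at the
root, and `h` at the right subtree. -/
def localView {S : Type*} (h : (List Bool → A) → S) (t : List Bool → A) : S × A × S :=
  (h (subtree t [false]), t [], h (subtree t [true]))

lemma localView_preimage_singleton {S : Type*} (h : (List Bool → A) → S) (x : S × A × S) :
    localView h ⁻¹' {x} =
      rootSplit ⁻¹' ((h ⁻¹' {x.1}) ×ˢ {x.2.1} ×ˢ (h ⁻¹' {x.2.2})) := by
  ext t
  simp [localView, rootSplit, Prod.ext_iff]

variable [MeasurableSpace A]

lemma measurable_cylinderEvents_subtree (v : List Bool) :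
    Measurable[cylinderEvents {w | v <+: w}] fun t : List Bool → A ↦ subtree t v :=
  @measurable_pi_lambda _ _ _ (cylinderEvents _) _ _ fun w ↦
    measurable_cylinderEvent_apply (List.prefix_append v w)

lemma measurable_subtree (v : List Bool) : Measurable fun t : List Bool → A ↦ subtree t v :=
  (measurable_cylinderEvents_subtree v).mono cylinderEvents_le_pi le_rfl

lemma measurable_rootSplit :
    Measurable (rootSplit : (List Bool → A) → (List Bool → A) × A × (List Bool → A)) :=
  (measurable_subtree _).prodMk ((measurable_pi_apply _).prodMk (measurable_subtree _))

variable (ν : Measure A) [IsProbabilityMeasure ν]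

lemma measurePreserving_subtree (v : List Bool) :
    MeasurePreserving (fun t : List Bool → A ↦ subtree t v)
      (Measure.infinitePi fun _ ↦ ν) (Measure.infinitePi fun _ ↦ ν) where
  measurable := measurable_subtree v
  map_eq := Measure.map_infinitePi_infinitePi_of_inj (List.append_right_injective v)

lemma indepFun_root_subtree {v : List Bool} (hv : v ≠ []) :
    (fun t : List Bool → A ↦ t []) ⟂ᵢ[Measure.infinitePi fun _ ↦ ν] fun t ↦ subtree t v := by
  have disjoint_nodes : Disjoint {[]} {w | v <+: w} := by simpa using hv
  exact indepFun_infinitePi_of_disjoint _ disjoint_nodes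
    (measurable_cylinderEvent_apply rfl) (measurable_cylinderEvents_subtree v)

lemma indepFun_subtree_prodMk_root_subtree {u v : List Bool} (huv : ¬u <+: v) (hvu : ¬v <+: u) :
    (fun t : List Bool → A ↦ subtree t u) ⟂ᵢ[Measure.infinitePi fun _ ↦ ν]
      fun t ↦ (t [], subtree t v) := by
  have disjoint_nodes : Disjoint {w | u <+: w} ({[]} ∪ {w | v <+: w}) := by
    rw [Set.disjoint_left]
    rintro w hu (rfl | hv)
    · exact huv (List.prefix_nil.mp hu ▸ List.nil_prefix)
    · exact (List.prefix_or_prefix_of_prefix hu hv).elim huv hvu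
  refine indepFun_infinitePi_of_disjoint _ disjoint_nodes
    (measurable_cylinderEvents_subtree u) (Measurable.prodMk ?_ ?_)
  · exact measurable_cylinderEvent_apply (Or.inl rfl)
  · exact (measurable_cylinderEvents_subtree v).mono
      (cylinderEvents_mono Set.subset_union_right) le_rfl

lemma measurePreserving_rootSplit :
    MeasurePreserving rootSplit (Measure.infinitePi fun _ : List Bool ↦ ν)
      ((Measure.infinitePi fun _ ↦ ν).prod (ν.prod (Measure.infinitePi fun _ ↦ ν))) := by
  have left := measurePreserving_subtree ν [false]
  have root := measurePreserving_eval_infinitePi (fun _ : List Bool ↦ ν) []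
  have right := measurePreserving_subtree ν [true]
  have law_root_right := (indepFun_root_subtree ν (by simp)).hasLaw_prod root.hasLaw right.hasLaw
  exact ((indepFun_subtree_prodMk_root_subtree ν (by simp) (by simp)).hasLaw_prod
    left.hasLaw law_root_right).measurePreserving measurable_rootSplit

variable [MeasurableSingletonClass A] {S : Type*} {h : (List Bool → A) → S}

lemma measurableSet_localView_preimage_singleton (hh : ∀ s, MeasurableSet (h ⁻¹' {s}))
    (x : S × A × S) : MeasurableSet (localView h ⁻¹' {x}) := by
  rw [localView_preimage_singleton]
  exact measurable_rootSplit ((hh _).prod ((measurableSet_singleton _).prod (hh _)))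

lemma measureReal_localView_preimage_singleton (hh : ∀ s, MeasurableSet (h ⁻¹' {s}))
    (x : S × A × S) :
    (Measure.infinitePi fun _ ↦ ν).real (localView h ⁻¹' {x}) =
      (Measure.infinitePi fun _ ↦ ν).real (h ⁻¹' {x.1}) *
        (ν.real {x.2.1} * (Measure.infinitePi fun _ ↦ ν).real (h ⁻¹' {x.2.2})) := by
  have box_measurable :
      MeasurableSet ((h ⁻¹' {x.1}) ×ˢ ({x.2.1} : Set A) ×ˢ (h ⁻¹' {x.2.2})) :=
    (hh _).prod ((measurableSet_singleton _).prod (hh _))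
  rw [localView_preimage_singleton,
    (measurePreserving_rootSplit ν).measureReal_preimage box_measurable.nullMeasurableSet,
    measureReal_prod_prod, measureReal_prod_prod]

end Trees

lemma measureReal_uniformOfFintype_singleton {A : Type*} [Fintype A] [Nonempty A]
    [MeasurableSpace A] [MeasurableSingletonClass A] (a : A) :
    (PMF.uniformOfFintype A).toMeasure.real {a} = (Fintype.card A : ℝ)⁻¹ := by
  simp [measureReal_def, PMF.toMeasure_apply_singleton _ a (measurableSet_singleton a)]

open scoped Classical in
lemma FOp_eq_sum {A Q : Type*} [Fintype A] [Fintype Q] (Δ : Set Q → A → Set Q → Set Q)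
    (β : Set Q → ℝ) (P : Set Q) :
    FOp Δ β P =
      ∑ x : Set Q × A × Set Q with Δ x.1 x.2.1 x.2.2 = P,
        β x.1 * ((Fintype.card A : ℝ)⁻¹ * β x.2.2) := by
  rw [FOp, finsum_mem_eq_finite_toFinset_sum _ (Set.toFinite _), Finset.mul_sum]
  exact Finset.sum_congr (by ext; simp) fun x _ ↦ by ring

/-- Let `h : Tr_A → Set Q` have `μ₀`-measurable fibers and let
`h' t = Δ (h (t↾[false])) (t []) (h (t↾[true]))`. Then the fibers of `h'` are measurable and
the induced distribution of `h'` (w.r.t. the uniform measure `μ₀`, i.e. the infinite product of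
uniform measures on `A`, characterized as the projective limit of finite products) is obtained
by applying `𝓕`: `μ⃗₀(h') = 𝓕(μ⃗₀(h))`. -/
theorem inducedDist_step {A Q : Type*}
    [Fintype A] [Nonempty A] [MeasurableSpace A] [DiscreteMeasurableSpace A] [Fintype Q]
    (μ₀ : Measure (List Bool → A))
    (hμ₀ : IsProjectiveLimit μ₀ (fun I : Finset (List Bool) =>
      Measure.pi fun _ : I => (PMF.uniformOfFintype A).toMeasure))
    (Δ : Set Q → A → Set Q → Set Q) (h : (List Bool → A) → Set Q)
    (hmeas : ∀ P : Set Q, MeasurableSet { t | h t = P }) :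
    (∀ P : Set Q, MeasurableSet
      { t | Δ (h (subtree t [false])) (t []) (h (subtree t [true])) = P }) ∧
    inducedDist μ₀ (fun t => Δ (h (subtree t [false])) (t []) (h (subtree t [true])))
      = FOp Δ (inducedDist μ₀ h) := by
  classical
  obtain rfl : μ₀ = Measure.infinitePi fun _ ↦ (PMF.uniformOfFintype A).toMeasure :=
    hμ₀.unique (Measure.isProjectiveLimit_infinitePi _)
  have fiber_measurable := measurableSet_localView_preimage_singleton hmeas
  let triples (P : Set Q) : Finset (Set Q × A × Set Q) := {x | Δ x.1 x.2.1 x.2.2 = P}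
  have event_eq (P : Set Q) :
      {t | Δ (h (subtree t [false])) (t []) (h (subtree t [true])) = P} =
        localView h ⁻¹' triples P := by
    ext t
    simp [triples, localView]
  refine ⟨fun P ↦ ?_, funext fun P ↦ ?_⟩
  · rw [event_eq, ← Set.biUnion_preimage_singleton]
    exact (triples P).measurableSet_biUnion fun x _ ↦ fiber_measurable x
  · rw [inducedDist, event_eq, ← measureReal_def,
      ← sum_measureReal_preimage_singleton _ fun x _ ↦ fiber_measurable x, FOp_eq_sum]
    refine Finset.sum_congr rfl fun x _ ↦ ?_
    rw [measureReal_localView_preimage_singleton _ hmeas, measureReal_uniformOfFintype_singleton]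
    rfl
end

section
/- Let μ be a probability measure on a measurable space T and let h_i : T → Set Q (for i : ℕ) each have measurable fibers { t | h_i t = P } for every P : Set Q. Assume the sequence is pointwise decreasing: h_{i+1} t ⊆ h_i t for all t and i. Define h_∞ t = ⋂_{i : ℕ} h_i t. Then for every P : Set Q, lim_{i→∞} μ { t | h_i t = P } = μ { t | h_∞ t = P }. -/
open MeasureTheory Filter

/-!
A decreasing family of sets that reaches a finite set `F` eventually equals its intersection, since
each of the finitely many points of `F` outside the intersection leaves the family at some stage.
Hence for each `t` the truth value of `h i t = P` eventually agrees with that of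
`⋂ j, h j t = P`, and convergence of measures is dominated convergence for the indicators of the
fibers.
-/

theorem eventually_eq_iInter_of_antitone {ι Q : Type*} [Preorder ι] {s : ι → Set Q}
    (hs : Antitone s) {i₀ : ι} (hfin : (s i₀).Finite) :
    ∀ᶠ i in atTop, s i = ⋂ j, s j := by
  have leaves : ∀ q, ∀ᶠ i in atTop, q ∈ s i → q ∈ ⋂ j, s j := by
    intro q
    by_cases hq : q ∈ ⋂ j, s j
    · exact .of_forall fun _ _ => hq
    · obtain ⟨n, hn⟩ : ∃ n, q ∉ s n := by simpa only [Set.mem_iInter, not_forall] using hq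
      filter_upwards [eventually_ge_atTop n] with i hi hqi
      exact absurd (hs hi hqi) hn
  filter_upwards [(eventually_all_finite hfin).2 fun q _ => leaves q, eventually_ge_atTop i₀]
    with i hi hi₀
  exact Set.Subset.antisymm (fun q hq => hi q (hs hi₀ hq) hq) (Set.iInter_subset s i)

theorem tendsto_measure_fiber_of_eventually_eq {ι T α : Type*} {L : Filter ι}
    [L.IsCountablyGenerated] [MeasurableSpace T] (μ : Measure T) [IsFiniteMeasure μ]
    {f : ι → T → α} {g : T → α} {a : α} (hmeas : ∀ i, MeasurableSet { t | f i t = a })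
    (hfg : ∀ t, ∀ᶠ i in L, f i t = g t) :
    Tendsto (fun i => μ { t | f i t = a }) L (nhds (μ { t | g t = a })) := by
  refine tendsto_measure_of_tendsto_indicator_of_isFiniteMeasure L μ hmeas fun t => ?_
  filter_upwards [hfg t] with i hi
  simp only [hi]

theorem tendsto_measure_fiber_of_decreasing_general {ι Q T : Type*} [Preorder ι]
    [(atTop : Filter ι).IsCountablyGenerated] [MeasurableSpace T] (μ : Measure T)
    [IsFiniteMeasure μ] {h : ι → T → Set Q} {P : Set Q}
    (hmeas : ∀ i, MeasurableSet { t | h i t = P }) (hanti : ∀ t, Antitone fun i => h i t)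
    (hfin : ∀ t, ∃ i, (h i t).Finite) :
    Tendsto (fun i => μ { t | h i t = P }) atTop (nhds (μ { t | (⋂ i, h i t) = P })) :=
  tendsto_measure_fiber_of_eventually_eq μ hmeas fun t =>
    (hfin t).elim fun _ => eventually_eq_iInter_of_antitone (hanti t)

/-- Let `μ` be a probability measure on `T` and let `h i : T → Set Q` (for `i : ℕ`) have
measurable fibers, with the sequence pointwise decreasing (`h (i+1) t ⊆ h i t`). With
`h_∞ t = ⋂ i, h i t`, for every `P : Set Q` we have
`lim_{i→∞} μ { t | h i t = P } = μ { t | h_∞ t = P }`. -/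
theorem tendsto_measure_fiber_of_decreasing {Q : Type*} [Fintype Q]
    {T : Type*} [MeasurableSpace T] (μ : Measure T) [IsProbabilityMeasure μ]
    (h : ℕ → T → Set Q) (hmeas : ∀ i (P : Set Q), MeasurableSet { t | h i t = P })
    (hdec : ∀ i t, h (i + 1) t ⊆ h i t) (P : Set Q) :
    Tendsto (fun i => μ { t | h i t = P }) atTop (nhds (μ { t | (⋂ i, h i t) = P })) :=
  tendsto_measure_fiber_of_decreasing_general μ (fun i => hmeas i P)
    (fun t => antitone_nat_of_succ_le fun i => hdec i t) fun t => ⟨0, (h 0 t).toFinite⟩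
end

section
/- Let μ be a probability measure on a measurable space T and let h_i : T → Set Q (for i : ℕ) each have measurable fibers { t | h_i t = P } for every P : Set Q. Assume the sequence is pointwise increasing: h_i t ⊆ h_{i+1} t for all t and i. Define h_∞ t = ⋃_{i : ℕ} h_i t. Then for every P : Set Q, lim_{i→∞} μ { t | h_i t = P } = μ { t | h_∞ t = P }. -/
/-!
In an order satisfying the ascending chain condition, such as the power set of a finite set, a
monotone net with a supremum is eventually equal to it. Hence the indicators of the fibers
converge pointwise, and since the measure is finite, dominated convergence gives convergence of
their measures.
-/

open MeasureTheory Filter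

lemma eventually_atTop_eq_of_isLUB {ι α : Type*} [Preorder ι] [Nonempty ι]
    [IsDirectedOrder ι] [PartialOrder α] [WellFoundedGT α] {f : ι → α} {a : α} (hf : Monotone f)
    (ha : IsLUB (Set.range f) a) : ∀ᶠ i in atTop, f i = a := by
  obtain ⟨_, ⟨n, rfl⟩, hmax⟩ := wellFounded_gt.has_min (Set.range f) (Set.range_nonempty f)
  have eq_of_ge : ∀ i ≥ n, f i = f n := fun i hi =>
    ((hf hi).eq_of_not_lt (hmax (f i) (Set.mem_range_self i))).symm
  have isGreatest : IsGreatest (Set.range f) (f n) := by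
    refine ⟨Set.mem_range_self n, Set.forall_mem_range.2 fun j => ?_⟩
    obtain ⟨i, hni, hji⟩ := exists_ge_ge n j
    exact (hf hji).trans_eq (eq_of_ge i hni)
  filter_upwards [eventually_ge_atTop n] with i hi
  exact (eq_of_ge i hi).trans (isGreatest.isLUB.unique ha)

lemma tendsto_measure_preimage_of_eventually_eq {ι T α : Type*} [MeasurableSpace T]
    {μ : Measure T} [IsFiniteMeasure μ] {l : Filter ι} [l.IsCountablyGenerated]
    {f : ι → T → α} {g : T → α} {s : Set α} (hmeas : ∀ i, MeasurableSet (f i ⁻¹' s))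
    (hfg : ∀ t, ∀ᶠ i in l, f i t = g t) :
    Tendsto (fun i => μ (f i ⁻¹' s)) l (nhds (μ (g ⁻¹' s))) := by
  refine tendsto_measure_of_tendsto_indicator_of_isFiniteMeasure l μ hmeas fun t => ?_
  filter_upwards [hfg t] with i hi
  rw [Set.mem_preimage, Set.mem_preimage, hi]

theorem tendsto_measure_fiber_of_increasing_general {ι T α : Type*} [Preorder ι]
    [Nonempty ι] [IsDirectedOrder ι] [(atTop : Filter ι).IsCountablyGenerated]
    [MeasurableSpace T] [PartialOrder α] [WellFoundedGT α] {μ : Measure T} [IsFiniteMeasure μ]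
    {f : ι → T → α} {g : T → α} {a : α} (hmeas : ∀ i, MeasurableSet { t | f i t = a })
    (hmono : ∀ t, Monotone (f · t)) (hlub : ∀ t, IsLUB (Set.range (f · t)) (g t)) :
    Tendsto (fun i => μ { t | f i t = a }) atTop (nhds (μ { t | g t = a })) :=
  tendsto_measure_preimage_of_eventually_eq (s := {a}) hmeas fun t =>
    eventually_atTop_eq_of_isLUB (hmono t) (hlub t)

/-- Let `μ` be a probability measure on `T` and let `h i : T → Set Q` (for `i : ℕ`) have
measurable fibers, with the sequence pointwise increasing (`h i t ⊆ h (i+1) t`). With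
`h_∞ t = ⋃ i, h i t`, for every `P : Set Q` we have
`lim_{i→∞} μ { t | h i t = P } = μ { t | h_∞ t = P }`. -/
theorem tendsto_measure_fiber_of_increasing {Q : Type*} [Fintype Q]
    {T : Type*} [MeasurableSpace T] (μ : Measure T) [IsProbabilityMeasure μ]
    (h : ℕ → T → Set Q) (hmeas : ∀ i (P : Set Q), MeasurableSet { t | h i t = P })
    (hinc : ∀ i t, h i t ⊆ h (i + 1) t) (P : Set Q) :
    Tendsto (fun i => μ { t | h i t = P }) atTop (nhds (μ { t | (⋃ i, h i t) = P })) :=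
  tendsto_measure_fiber_of_increasing_general (fun i => hmeas i P)
    (fun t => monotone_nat_of_le_succ (hinc · t)) (fun _ => isLUB_iSup)
end

section
/- Let G : (Set Q → ℝ) → (Set Q → ℝ) be continuous with respect to the product topology on (Set Q → ℝ), map distributions on 𝒫(Q) to distributions on 𝒫(Q), and be monotone with respect to ⪯ on distributions. Let β : ℕ → (Set Q → ℝ) be a sequence of distributions with β(i+1) = G(β i) and β(i+1) ⪯ β(i) for all i, converging pointwise to β_∞. Then β_∞ is a distribution, G(β_∞) = β_∞, β_∞ ⪯ β 0, and β_∞ is the ⪯-greatest such fixed point below β 0: every distribution θ with G(θ) = θ and θ ⪯ β 0 satisfies θ ⪯ β_∞. -/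
open Filter

/-!
Let `u (n + 1) = f (u n)` with `u 1 ⪯ u 0`. Monotonicity traps every iterate between `u 0` and each
post-fixed point `y ⪯ f y` below `u 0`: from `y ⪯ u n` one gets `y ⪯ f y ⪯ f (u n) = u (n + 1)`.
Both bounds are closed conditions, so they pass to the limit of the iteration, which is a fixed
point by continuity. For distributions, `⪯` is closed because each sum over an
upward-closed family is a continuous function of the weights.
-/

section Iteration

variable {X : Type*} {r : X → X → Prop} [IsTrans X r] {s : Set X} {f : X → X} {u : ℕ → X}

theorem rel_seq_of_rel_apply (hmono : ∀ x ∈ s, ∀ y ∈ s, r x y → r (f x) (f y))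
    (hu : ∀ n, u n ∈ s) (hstep : ∀ n, u (n + 1) = f (u n)) {y : X} (hy : y ∈ s)
    (hpost : r y (f y)) (hy₀ : r y (u 0)) (n : ℕ) : r y (u n) := by
  induction n with
  | zero => exact hy₀
  | succ n ih =>
    rw [hstep]
    exact _root_.trans hpost (hmono y hy (u n) (hu n) ih)

theorem rel_seq_succ_zero (hmono : ∀ x ∈ s, ∀ y ∈ s, r x y → r (f x) (f y))
    (hu : ∀ n, u n ∈ s) (hstep : ∀ n, u (n + 1) = f (u n)) (hpre : r (f (u 0)) (u 0)) (n : ℕ) :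
    r (u (n + 1)) (u 0) := by
  induction n with
  | zero => rwa [hstep]
  | succ n ih =>
    rw [hstep]
    exact _root_.trans (hmono _ (hu (n + 1)) _ (hu 0) ih) hpre

variable [TopologicalSpace X]

theorem isFixedPt_of_tendsto_seq [T2Space X] (hu : ∀ n, u n ∈ s)
    (hstep : ∀ n, u (n + 1) = f (u n)) {x : X} (hf : ContinuousWithinAt f s x)
    (hlim : Tendsto u atTop (nhds x)) : Function.IsFixedPt f x := by
  have hwithin : Tendsto u atTop (nhdsWithin x s) :=
    tendsto_nhdsWithin_iff.mpr ⟨hlim, .of_forall hu⟩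
  have himage : Tendsto (fun n ↦ u (n + 1)) atTop (nhds (f x)) := by
    simpa only [hstep, Function.comp_def] using hf.tendsto.comp hwithin
  exact tendsto_nhds_unique himage ((tendsto_add_atTop_iff_nat 1).mpr hlim)

theorem greatest_fixed_point_of_decreasing_iteration_general [T2Space X] (hs : IsClosed s)
    (hlower : IsClosed {x | r x (u 0)}) (hupper : ∀ x, IsClosed {y | r x y})
    (hmono : ∀ x ∈ s, ∀ y ∈ s, r x y → r (f x) (f y))
    (hu : ∀ n, u n ∈ s) (hstep : ∀ n, u (n + 1) = f (u n)) (hpre : r (f (u 0)) (u 0))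
    {x : X} (hf : ContinuousWithinAt f s x) (hlim : Tendsto u atTop (nhds x)) :
    x ∈ s ∧ f x = x ∧ r x (u 0) ∧ ∀ y ∈ s, r y (f y) → r y (u 0) → r y x := by
  refine ⟨hs.mem_of_tendsto hlim (.of_forall hu), isFixedPt_of_tendsto_seq hu hstep hf hlim,
    ?_, fun y hy hpost hy₀ ↦ ?_⟩
  · exact hlower.mem_of_tendsto ((tendsto_add_atTop_iff_nat 1).mpr hlim)
      (.of_forall (rel_seq_succ_zero hmono hu hstep hpre))
  · exact (hupper y).mem_of_tendsto hlim
      (.of_forall (rel_seq_of_rel_apply hmono hu hstep hy hpost hy₀))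

end Iteration

section Distribution

theorem continuous_finsum_mem_apply {ι M : Type*} [Finite ι] [AddCommMonoid M]
    [TopologicalSpace M] [ContinuousAdd M] (t : Set ι) :
    Continuous fun a : ι → M ↦ ∑ᶠ i ∈ t, a i :=
  continuous_finsum_cond (fun i _ ↦ continuous_apply i) (locallyFinite_of_finite _)

variable {Q : Type*} [Fintype Q]

theorem isClosed_setOf_isDistribution : IsClosed {α : Set Q → ℝ | IsDistribution α} :=
  isClosed_stdSimplex ℝ (Set Q)

theorem DistLE.refl (α : Set Q → ℝ) : DistLE α α :=
  fun _ _ ↦ le_rfl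

instance : IsTrans (Set Q → ℝ) DistLE where
  trans _ _ _ hαβ hβγ U hU := (hαβ U hU).trans (hβγ U hU)

theorem isClosed_setOf_distLE {X : Type*} [TopologicalSpace X] {a b : X → Set Q → ℝ}
    (ha : Continuous a) (hb : Continuous b) : IsClosed {x | DistLE (a x) (b x)} := by
  simp only [DistLE, Set.ofPred_forall]
  exact isClosed_iInter fun U ↦ isClosed_iInter fun _ ↦
    isClosed_le ((continuous_finsum_mem_apply U).comp ha) ((continuous_finsum_mem_apply U).comp hb)

end Distribution

/-- Let `G` be continuous (product topology on `Set Q → ℝ`), map distributions to distributions,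
and be `⪯`-monotone on distributions. Let `β` be a sequence of distributions with
`β (i+1) = G (β i)` and `β (i+1) ⪯ β i`, converging pointwise to `β_∞`. Then `β_∞` is a
distribution, a fixed point of `G`, `β_∞ ⪯ β 0`, and `β_∞` is the `⪯`-greatest fixed point of
`G` below `β 0`. -/
theorem greatest_fixed_point_of_decreasing_iteration {Q : Type*} [Fintype Q]
    (G : (Set Q → ℝ) → (Set Q → ℝ)) (hGcont : Continuous G)
    (hGdist : ∀ α, IsDistribution α → IsDistribution (G α))
    (hGmono : ∀ α β, IsDistribution α → IsDistribution β → DistLE α β → DistLE (G α) (G β))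
    (β : ℕ → Set Q → ℝ) (hβdist : ∀ i, IsDistribution (β i))
    (hstep : ∀ i, β (i + 1) = G (β i)) (hdec : ∀ i, DistLE (β (i + 1)) (β i))
    (βinf : Set Q → ℝ)
    (hconv : ∀ P : Set Q, Tendsto (fun i => β i P) atTop (nhds (βinf P))) :
    IsDistribution βinf ∧ G βinf = βinf ∧ DistLE βinf (β 0) ∧
    ∀ θ : Set Q → ℝ, IsDistribution θ → G θ = θ → DistLE θ (β 0) → DistLE θ βinf := by
  obtain ⟨hdist, hfix, hle, hgreatest⟩ := greatest_fixed_point_of_decreasing_iteration_general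
    (r := DistLE) isClosed_setOf_isDistribution
    (isClosed_setOf_distLE continuous_id continuous_const)
    (fun _ ↦ isClosed_setOf_distLE continuous_const continuous_id)
    (fun α hα γ hγ ↦ hGmono α γ hα hγ) hβdist hstep (hstep 0 ▸ hdec 0)
    hGcont.continuousWithinAt (tendsto_pi_nhds.mpr hconv)
  exact ⟨hdist, hfix, hle, fun θ hθ hθfix ↦ hgreatest θ hθ (hθfix.symm ▸ DistLE.refl θ)⟩
end
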